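/- arXiv:0803.3499 — 2 statements merged into one kernel-verified Lean document; each statement's English description precedes it below -/
import Mathlib

section
/- Let d≥1, 0<c₁≤c₂, ρ:ℝ×ℝ^d→ℝ measurable with c₁ ≤ ρ ≤ c₂, and f:ℝ×ℝ^d×ℝ→ℝ bounded measurable. Let ρ⁺,ρ⁻:ℝ^d→ℝ with ρ^± ≥ c₁, (ρf)⁺,(ρf)⁻:ℝ^d×ℝ→ℝ, and measurable bounded α:ℝ×ℝ^d→ℝ, β₀:ℝ×ℝ^d×ℝ→ℝ such that for all x₁≠0: (1/x₁)∫₀^{x₁} ρ(t,x₂)dt − ρ^±(x₁,x₂) = (1+|x₂|²)α(x₁,x₂) and (1/x₁)∫₀^{x₁} ρ(t,x₂)f(t,x₂,y)dt − (ρf)^±(x₁,x₂,y) = (1+|x₂|²+|y|²)β₀(x₁,x₂,y). Set f̄ := (ρf)^±/ρ^±, and for ε>0 define the corrector V^ε(x₁,x₂,y) := ∫₀^{x₁} ∫₀^s ρ(t/ε,x₂)[f(t/ε,x₂,y) − f̄(t,x₂,y)]dt ds. Define β̃(z,x₂,y) := z^{−2}∫₀^z t β₀(t,x₂,y)dt and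 α̃(z,x₂) := z^{−2}∫₀^z t α(t,x₂)dt for z≠0 (value 0 at z=0). Then for all ε>0 and x₁≠0: V^ε(x₁,x₂,y) = x₁²(1+|x₂|²+|y|²)β̃(x₁/ε,x₂,y) − x₁²(1+|x₂|²) f̄(x₁,x₂,y) α̃(x₁/ε,x₂). Moreover, if lim_{|z|→∞} sup_{x₂}|α(z,x₂)| = 0 and lim_{|z|→∞} sup_{(x₂,y)}|β₀(z,x₂,y)| = 0, then β̃ and α̃ are bounded and satisfy lim_{|z|→∞} sup_{x₂}|α̃(z,x₂)| = 0 and lim_{|z|→∞} sup_{(x₂,y)}|β̃(z,x₂,y)| = 0. -/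
open MeasureTheory Filter Topology

/-- The piecewise function `g^±(x₁,·) = g⁺(·)` for `x₁ > 0` and `g⁻(·)` for `x₁ ≤ 0`. -/
noncomputable def pmFun {E G : Type*} (gp gm : E → G) (x₁ : ℝ) (x₂ : E) : G :=
  if 0 < x₁ then gp x₂ else gm x₂

/-- The averaged nonlinearity `f̄(x₁,x₂,y) = (ρf)^±(x₁,x₂,y) / ρ^±(x₁,x₂)`. -/
noncomputable def fbar {E : Type*} (ρp ρm : E → ℝ) (ρfp ρfm : E → ℝ → ℝ)
    (x₁ : ℝ) (x₂ : E) (y : ℝ) : ℝ :=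
  pmFun ρfp ρfm x₁ x₂ y / pmFun ρp ρm x₁ x₂

/-! On one side of `0` the functions `ρ^±`, `(ρf)^±` and `f̄` do not depend on `x₁`. Writing
`F` for the value of `f̄`, the terms `(ρf)^±` and `F ρ^±` cancel in the mean of `ρ (f - F)`
over `[0, z]`, which is therefore a combination of the remainders `β₀(z)` and `α(z)` alone.
Rescaling by `ε` turns the inner integral of the corrector into `s` times that combination
at `s / ε`, and the outer integral into `x₁²` times its normalized first moment at `x₁ / ε`.
A normalized first moment inherits bounds and decay at infinity, because
`z⁻² |∫₀ᶻ t g(t) dt| ≤ K` as soon as `|t g(t)| ≤ K |z|` for all `|t| ≤ |z|`. -/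

theorem mul_pos_of_mem_uIoo_zero {R : Type*} [Ring R] [LinearOrder R] [IsStrictOrderedRing R]
    {t z : R} (ht : t ∈ Set.uIoo 0 z) : 0 < t * z := by
  rcases le_total 0 z with hz | hz
  · obtain ⟨ht_pos, htz⟩ : t ∈ Set.Ioo 0 z := by rwa [Set.uIoo_of_le hz] at ht
    exact mul_pos ht_pos (ht_pos.trans htz)
  · obtain ⟨hzt, ht_neg⟩ : t ∈ Set.Ioo z 0 := by rwa [Set.uIoo_of_ge hz] at ht
    exact mul_pos_of_neg_of_neg ht_neg (hzt.trans ht_neg)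

theorem intervalIntegrable_of_norm_le {E : Type*} [NormedAddCommGroup E] {g : ℝ → E} {C : ℝ}
    (hg : AEStronglyMeasurable g) (hC : ∀ t, ‖g t‖ ≤ C) (a b : ℝ) :
    IntervalIntegrable g volume a b :=
  (intervalIntegrable_const (c := C)).mono_fun' hg.restrict (.of_forall hC)

section NormalizedFirstMoment

variable {E : Type*} [NormedAddCommGroup E] [NormedSpace ℝ E]

/-- The normalized first moment `z⁻² ∫₀ᶻ t g(t) dt`, which produces `α̃` and `β̃` from `α` and `β₀`.
Its value at `z = 0` is `0`, because `0⁻¹ = 0`. -/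
noncomputable def normalizedFirstMoment (g : ℝ → E) (z : ℝ) : E :=
  (z ^ 2)⁻¹ • ∫ t in (0 : ℝ)..z, t • g t

@[simp]
theorem normalizedFirstMoment_zero_right (g : ℝ → E) : normalizedFirstMoment g 0 = 0 := by
  simp [normalizedFirstMoment]

theorem normalizedFirstMoment_const_smul (c : ℝ) (g : ℝ → E) (z : ℝ) :
    normalizedFirstMoment (fun t => c • g t) z = c • normalizedFirstMoment g z := by
  simp only [normalizedFirstMoment, smul_comm _ c, intervalIntegral.integral_smul]

theorem normalizedFirstMoment_sub {g h : ℝ → E} {z : ℝ}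
    (hg : IntervalIntegrable (fun t => t • g t) volume 0 z)
    (hh : IntervalIntegrable (fun t => t • h t) volume 0 z) :
    normalizedFirstMoment (fun t => g t - h t) z
      = normalizedFirstMoment g z - normalizedFirstMoment h z := by
  simp only [normalizedFirstMoment, smul_sub, intervalIntegral.integral_sub hg hh]

theorem eq_normalizedFirstMoment_of_forall_ne_zero {g φ : ℝ → E} (h₀ : φ 0 = 0)
    (h : ∀ z, z ≠ 0 → φ z = (z ^ 2)⁻¹ • ∫ t in (0 : ℝ)..z, t • g t) (z : ℝ) :
    φ z = normalizedFirstMoment g z := by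
  rcases eq_or_ne z 0 with rfl | hz
  · rw [h₀, normalizedFirstMoment_zero_right]
  · exact h z hz

theorem norm_normalizedFirstMoment_le_of_norm_smul_le {g : ℝ → E} {z K : ℝ} (hK : 0 ≤ K)
    (h : ∀ t, |t| ≤ |z| → ‖t • g t‖ ≤ K * |z|) : ‖normalizedFirstMoment g z‖ ≤ K := by
  rcases eq_or_ne z 0 with rfl | hz
  · simpa using hK
  have abs_le_of_mem {t : ℝ} (ht : t ∈ Set.uIoc 0 z) : |t| ≤ |z| := by
    simpa using Set.abs_sub_left_of_mem_uIcc (Set.uIoc_subset_uIcc ht)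
  have norm_integral_le : ‖∫ t in (0 : ℝ)..z, t • g t‖ ≤ K * |z| * |z - 0| :=
    intervalIntegral.norm_integral_le_of_norm_le_const fun t ht => h t (abs_le_of_mem ht)
  rw [normalizedFirstMoment, norm_smul, norm_inv, norm_pow, Real.norm_eq_abs,
    inv_mul_le_iff₀ (by positivity)]
  calc ‖∫ t in (0 : ℝ)..z, t • g t‖ ≤ K * |z| * |z - 0| := norm_integral_le
    _ = |z| ^ 2 * K := by rw [sub_zero]; ring

theorem norm_normalizedFirstMoment_le {g : ℝ → E} {C : ℝ} (hg : ∀ t, ‖g t‖ ≤ C) (z : ℝ) :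
    ‖normalizedFirstMoment g z‖ ≤ C := by
  have hC : 0 ≤ C := (norm_nonneg _).trans (hg 0)
  refine norm_normalizedFirstMoment_le_of_norm_smul_le hC fun t ht => ?_
  rw [norm_smul, Real.norm_eq_abs, mul_comm]
  gcongr
  exact hg t

theorem exists_forall_norm_normalizedFirstMoment_le {ι : Type*} {g : ι → ℝ → E} {C δ R : ℝ}
    (hδ : 0 < δ) (hC : ∀ i t, ‖g i t‖ ≤ C) (hR : ∀ t, R ≤ |t| → ∀ i, ‖g i t‖ ≤ δ) :
    ∃ R' : ℝ, ∀ z, R' ≤ |z| → ∀ i, ‖normalizedFirstMoment (g i) z‖ ≤ δ := by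
  refine ⟨R * C / δ, fun z hz i =>
    norm_normalizedFirstMoment_le_of_norm_smul_le hδ.le fun t ht => ?_⟩
  rw [norm_smul, Real.norm_eq_abs]
  rcases le_total R |t| with hRt | htR
  · calc |t| * ‖g i t‖ ≤ |z| * δ := by gcongr; exact hR t hRt i
      _ = δ * |z| := mul_comm _ _
  · calc |t| * ‖g i t‖ ≤ R * C :=
          mul_le_mul htR (hC i t) (norm_nonneg _) ((abs_nonneg t).trans htR)
      _ ≤ δ * |z| := (div_le_iff₀' hδ).1 hz

theorem integral_smul_comp_div (g : ℝ → E) {ε : ℝ} (hε : ε ≠ 0) (x : ℝ) :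
    ∫ s in (0 : ℝ)..x, s • g (s / ε) = x ^ 2 • normalizedFirstMoment g (x / ε) := by
  rcases eq_or_ne x 0 with rfl | hx
  · simp
  calc ∫ s in (0 : ℝ)..x, s • g (s / ε)
      = ε • ∫ s in (0 : ℝ)..x, (s / ε) • g (s / ε) := by
        simp only [← intervalIntegral.integral_smul, smul_smul, mul_div_cancel₀ _ hε]
    _ = ε ^ 2 • ∫ t in (0 : ℝ)..x / ε, t • g t := by
        rw [intervalIntegral.integral_comp_div (fun t => t • g t) hε, zero_div, smul_smul, sq]
    _ = x ^ 2 • normalizedFirstMoment g (x / ε) := by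
        rw [normalizedFirstMoment, smul_smul]
        congr 1
        field_simp

end NormalizedFirstMoment

section Mean

variable {F : Type*} [NormedAddCommGroup F] [NormedSpace ℝ F]

theorem integral_comp_div_eq_smul_mean (g : ℝ → F) {ε : ℝ} (hε : ε ≠ 0) {s : ℝ} (hs : s ≠ 0) :
    ∫ t in (0 : ℝ)..s, g (t / ε) = s • (s / ε)⁻¹ • ∫ t in (0 : ℝ)..s / ε, g t := by
  rw [intervalIntegral.integral_comp_div g hε, zero_div, smul_smul]
  congr 1
  field_simp

theorem integral_integral_comp_div {g r : ℝ → F} {ε x : ℝ} (hε : ε ≠ 0)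
    (hr : ∀ z, 0 < z * (x / ε) → z⁻¹ • ∫ t in (0 : ℝ)..z, g t = r z) :
    ∫ s in (0 : ℝ)..x, ∫ t in (0 : ℝ)..s, g (t / ε)
      = x ^ 2 • normalizedFirstMoment r (x / ε) := by
  rw [← integral_smul_comp_div r hε]
  refine intervalIntegral.integral_congr_uIoo fun s hs => ?_
  have hsx : 0 < s * x := mul_pos_of_mem_uIoo_zero hs
  have hsx_div : 0 < s / ε * (x / ε) := by
    rw [div_mul_div_comm]
    exact div_pos hsx (mul_self_pos.2 hε)
  rw [integral_comp_div_eq_smul_mean g hε (left_ne_zero_of_mul hsx.ne'), hr _ hsx_div]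

-- Up to the factor `w`, the function `z • a z` is the primitive of `g` minus a linear function.
theorem intervalIntegrable_smul_of_mean_sub_eq {g a : ℝ → F} {m : F} {w z₀ : ℝ}
    (hg : ∀ t₁ t₂, IntervalIntegrable g volume t₁ t₂) (hw : w ≠ 0)
    (ha : ∀ z, 0 < z * z₀ → (z⁻¹ • ∫ t in (0 : ℝ)..z, g t) - m = w • a z) :
    IntervalIntegrable (fun z => z • a z) volume 0 z₀ := by
  have continuous_primitive : Continuous fun z => ∫ t in (0 : ℝ)..z, g t :=
    intervalIntegral.continuous_primitive hg 0
  have continuous_rhs : Continuous fun z => w⁻¹ • ((∫ t in (0 : ℝ)..z, g t) - z • m) := by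
    fun_prop
  refine (continuous_rhs.intervalIntegrable 0 z₀).congr_uIoo fun z hz => ?_
  have hzz₀ : 0 < z * z₀ := mul_pos_of_mem_uIoo_zero hz
  have hz_ne : z ≠ 0 := left_ne_zero_of_mul hzz₀.ne'
  calc w⁻¹ • ((∫ t in (0 : ℝ)..z, g t) - z • m)
      = w⁻¹ • z • ((z⁻¹ • ∫ t in (0 : ℝ)..z, g t) - m) := by
        rw [smul_sub z, smul_inv_smul₀ hz_ne]
    _ = z • a z := by rw [ha z hzz₀, smul_comm z w, inv_smul_smul₀ hw]

theorem integral_integral_mul_comp_div_sub_div {ρ f a b : ℝ → ℝ} {m k u v ε x : ℝ}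
    (hρ : ∀ t₁ t₂, IntervalIntegrable ρ volume t₁ t₂)
    (hρf : ∀ t₁ t₂, IntervalIntegrable (fun t => ρ t * f t) volume t₁ t₂)
    (hm : m ≠ 0) (hu : u ≠ 0) (hv : v ≠ 0) (hε : ε ≠ 0)
    (ha : ∀ z, 0 < z * (x / ε) → z⁻¹ * (∫ t in (0 : ℝ)..z, ρ t) - m = u * a z)
    (hb : ∀ z, 0 < z * (x / ε) → z⁻¹ * (∫ t in (0 : ℝ)..z, ρ t * f t) - k = v * b z) :
    ∫ s in (0 : ℝ)..x, ∫ t in (0 : ℝ)..s, ρ (t / ε) * (f (t / ε) - k / m)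
      = x ^ 2 * v * normalizedFirstMoment b (x / ε)
        - x ^ 2 * u * (k / m) * normalizedFirstMoment a (x / ε) := by
  have mean_eq : ∀ z, 0 < z * (x / ε) →
      z⁻¹ • ∫ t in (0 : ℝ)..z, ρ t * (f t - k / m) = v • b z - (k / m * u) • a z := by
    intro z hz
    have integral_eq : ∫ t in (0 : ℝ)..z, ρ t * (f t - k / m)
        = (∫ t in (0 : ℝ)..z, ρ t * f t) - (∫ t in (0 : ℝ)..z, ρ t) * (k / m) := by
      simp only [mul_sub]
      rw [intervalIntegral.integral_sub (hρf 0 z) ((hρ 0 z).mul_const _),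
        intervalIntegral.integral_mul_const]
    have hkm : k / m * m = k := div_mul_cancel₀ k hm
    simp only [smul_eq_mul]
    rw [integral_eq]
    linear_combination hb z hz - k / m * ha z hz - hkm
  have smul_integrable {c : ℝ} {φ : ℝ → ℝ}
      (hφ : IntervalIntegrable (fun z => z • φ z) volume 0 (x / ε)) :
      IntervalIntegrable (fun z => z • c • φ z) volume 0 (x / ε) := by
    simpa only [smul_comm _ c] using hφ.continuousOn_smul (continuousOn_const (c := c))
  rw [integral_integral_comp_div hε mean_eq, normalizedFirstMoment_sub
    (smul_integrable (intervalIntegrable_smul_of_mean_sub_eq hρf hv hb))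
    (smul_integrable (intervalIntegrable_smul_of_mean_sub_eq hρ hu ha)),
    normalizedFirstMoment_const_smul, normalizedFirstMoment_const_smul]
  simp only [smul_eq_mul]
  ring

end Mean

section TwoSided

variable {E : Type*}

theorem pmFun_eq_of_mul_pos {G : Type*} (gp gm : E → G) {s t : ℝ} (h : 0 < s * t) :
    pmFun gp gm s = pmFun gp gm t := by
  funext x₂
  simp only [pmFun, pos_iff_pos_of_mul_pos h]

theorem pmFun_ne_zero {G : Type*} [Zero G] {gp gm : E → G} {x₂ : E}
    (hp : gp x₂ ≠ 0) (hm : gm x₂ ≠ 0) (x₁ : ℝ) : pmFun gp gm x₁ x₂ ≠ 0 := by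
  unfold pmFun
  split_ifs
  exacts [hp, hm]

theorem fbar_eq_of_mul_pos (ρp ρm : E → ℝ) (ρfp ρfm : E → ℝ → ℝ) {s t : ℝ} (h : 0 < s * t) :
    fbar ρp ρm ρfp ρfm s = fbar ρp ρm ρfp ρfm t := by
  funext x₂ y
  simp only [fbar, pmFun_eq_of_mul_pos _ _ h]

theorem integral_integral_apply_fbar {G : Type*} [NormedAddCommGroup G] [NormedSpace ℝ G]
    (g : ℝ → ℝ → G) (ρp ρm : E → ℝ) (ρfp ρfm : E → ℝ → ℝ) (x₁ : ℝ) (x₂ : E) (y : ℝ) :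
    ∫ s in (0 : ℝ)..x₁, ∫ t in (0 : ℝ)..s, g t (fbar ρp ρm ρfp ρfm t x₂ y)
      = ∫ s in (0 : ℝ)..x₁, ∫ t in (0 : ℝ)..s, g t (fbar ρp ρm ρfp ρfm x₁ x₂ y) := by
  refine intervalIntegral.integral_congr_uIoo fun s hs =>
    intervalIntegral.integral_congr_uIoo fun t ht => ?_
  rw [fbar_eq_of_mul_pos _ _ _ _ (mul_pos_of_mem_uIoo_zero ht),
    fbar_eq_of_mul_pos _ _ _ _ (mul_pos_of_mem_uIoo_zero hs)]

theorem integral_integral_mul_comp_div_sub_fbar [Norm E] {ρ : ℝ → E → ℝ} {f : ℝ → E → ℝ → ℝ}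
    {ρp ρm : E → ℝ} {ρfp ρfm : E → ℝ → ℝ} {α : ℝ → E → ℝ} {β₀ : ℝ → E → ℝ → ℝ} {x₂ : E} {y : ℝ}
    (hρ : ∀ a b, IntervalIntegrable (fun t => ρ t x₂) volume a b)
    (hρf : ∀ a b, IntervalIntegrable (fun t => ρ t x₂ * f t x₂ y) volume a b)
    (hρp : ρp x₂ ≠ 0) (hρm : ρm x₂ ≠ 0)
    (hα : ∀ x₁ : ℝ, x₁ ≠ 0 →
      (1 / x₁) * (∫ t in (0 : ℝ)..x₁, ρ t x₂) - pmFun ρp ρm x₁ x₂ = (1 + ‖x₂‖ ^ 2) * α x₁ x₂)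
    (hβ₀ : ∀ x₁ : ℝ, x₁ ≠ 0 →
      (1 / x₁) * (∫ t in (0 : ℝ)..x₁, ρ t x₂ * f t x₂ y) - pmFun ρfp ρfm x₁ x₂ y
        = (1 + ‖x₂‖ ^ 2 + |y| ^ 2) * β₀ x₁ x₂ y)
    {ε : ℝ} (hε : 0 < ε) (x₁ : ℝ) :
    (∫ s in (0 : ℝ)..x₁, ∫ t in (0 : ℝ)..s,
        ρ (t / ε) x₂ * (f (t / ε) x₂ y - fbar ρp ρm ρfp ρfm t x₂ y))
      = x₁ ^ 2 * (1 + ‖x₂‖ ^ 2 + |y| ^ 2) * normalizedFirstMoment (fun t => β₀ t x₂ y) (x₁ / ε)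
        - x₁ ^ 2 * (1 + ‖x₂‖ ^ 2) * fbar ρp ρm ρfp ρfm x₁ x₂ y
          * normalizedFirstMoment (fun t => α t x₂) (x₁ / ε) := by
  have mul_pos_of_div {z : ℝ} (hz : 0 < z * (x₁ / ε)) : 0 < z * x₁ := by
    rwa [← mul_div_assoc, div_pos_iff_of_pos_right hε] at hz
  rw [integral_integral_apply_fbar (fun t c => ρ (t / ε) x₂ * (f (t / ε) x₂ y - c))]
  refine integral_integral_mul_comp_div_sub_div hρ hρf (pmFun_ne_zero hρp hρm x₁)
    (by positivity) (by positivity) hε.ne' (fun z hz => ?_) fun z hz => ?_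
  · rw [← pmFun_eq_of_mul_pos _ _ (mul_pos_of_div hz), ← one_div]
    exact hα z (left_ne_zero_of_mul hz.ne')
  · rw [← pmFun_eq_of_mul_pos _ _ (mul_pos_of_div hz), ← one_div]
    exact hβ₀ z (left_ne_zero_of_mul hz.ne')

end TwoSided

theorem stmt_5_general {E : Type*} [Norm E] (ρ : ℝ → E → ℝ) (f : ℝ → E → ℝ → ℝ)
    (hρ : ∀ x₂ a b, IntervalIntegrable (fun t => ρ t x₂) volume a b)
    (hρf : ∀ x₂ y a b, IntervalIntegrable (fun t => ρ t x₂ * f t x₂ y) volume a b)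
    (ρp ρm : E → ℝ) (hρp : ∀ x₂, ρp x₂ ≠ 0) (hρm : ∀ x₂, ρm x₂ ≠ 0)
    (ρfp ρfm : E → ℝ → ℝ)
    (α : ℝ → E → ℝ) (hαbd : ∃ Cα : ℝ, ∀ z x₂, |α z x₂| ≤ Cα)
    (β₀ : ℝ → E → ℝ → ℝ) (hβ₀bd : ∃ Cβ : ℝ, ∀ z x₂ y, |β₀ z x₂ y| ≤ Cβ)
    (hα : ∀ x₁ : ℝ, x₁ ≠ 0 → ∀ x₂,
      (1 / x₁) * (∫ t in (0 : ℝ)..x₁, ρ t x₂) - pmFun ρp ρm x₁ x₂ = (1 + ‖x₂‖ ^ 2) * α x₁ x₂)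
    (hβ₀ : ∀ x₁ : ℝ, x₁ ≠ 0 → ∀ x₂ y,
      (1 / x₁) * (∫ t in (0 : ℝ)..x₁, ρ t x₂ * f t x₂ y) - pmFun ρfp ρfm x₁ x₂ y
        = (1 + ‖x₂‖ ^ 2 + |y| ^ 2) * β₀ x₁ x₂ y)
    (V : ℝ → ℝ → E → ℝ → ℝ)
    (hV : ∀ ε : ℝ, 0 < ε → ∀ x₁ x₂ y,
      V ε x₁ x₂ y = ∫ s in (0 : ℝ)..x₁, ∫ t in (0 : ℝ)..s,
        ρ (t / ε) x₂ * (f (t / ε) x₂ y - fbar ρp ρm ρfp ρfm t x₂ y))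
    (βt : ℝ → E → ℝ → ℝ)
    (hβt : ∀ z x₂ y, βt z x₂ y = normalizedFirstMoment (fun t => β₀ t x₂ y) z)
    (αt : ℝ → E → ℝ)
    (hαt : ∀ z x₂, αt z x₂ = normalizedFirstMoment (fun t => α t x₂) z) :
    (∀ ε : ℝ, 0 < ε → ∀ x₁ x₂ y,
      V ε x₁ x₂ y
        = x₁ ^ 2 * (1 + ‖x₂‖ ^ 2 + |y| ^ 2) * βt (x₁ / ε) x₂ y
          - x₁ ^ 2 * (1 + ‖x₂‖ ^ 2) * fbar ρp ρm ρfp ρfm x₁ x₂ y * αt (x₁ / ε) x₂) ∧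
    (∃ C : ℝ, ∀ z x₂, |αt z x₂| ≤ C) ∧
    (∃ C : ℝ, ∀ z x₂ y, |βt z x₂ y| ≤ C) ∧
    ((∀ δ : ℝ, 0 < δ → ∃ R : ℝ, ∀ z : ℝ, R ≤ |z| → ∀ x₂, |α z x₂| ≤ δ) →
      ∀ δ : ℝ, 0 < δ → ∃ R : ℝ, ∀ z : ℝ, R ≤ |z| → ∀ x₂, |αt z x₂| ≤ δ) ∧
    ((∀ δ : ℝ, 0 < δ → ∃ R : ℝ, ∀ z : ℝ, R ≤ |z| → ∀ x₂ y, |β₀ z x₂ y| ≤ δ) →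
      ∀ δ : ℝ, 0 < δ → ∃ R : ℝ, ∀ z : ℝ, R ≤ |z| → ∀ x₂ y, |βt z x₂ y| ≤ δ) := by
  obtain ⟨Cα, hCα⟩ := hαbd
  obtain ⟨Cβ, hCβ⟩ := hβ₀bd
  simp only [hαt, hβt]
  refine ⟨fun ε hε x₁ x₂ y => ?corrector, ⟨Cα, fun z x₂ => ?boundα⟩, ⟨Cβ, fun z x₂ y => ?boundβ⟩,
    fun hdecay δ hδ => ?decayα, fun hdecay δ hδ => ?decayβ⟩
  case corrector =>
    rw [hV ε hε]
    exact integral_integral_mul_comp_div_sub_fbar (hρ x₂) (hρf x₂ y) (hρp x₂) (hρm x₂)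
      (fun z hz => hα z hz x₂) (fun z hz => hβ₀ z hz x₂ y) hε x₁
  case boundα => exact norm_normalizedFirstMoment_le (g := fun t => α t x₂) (hCα · x₂) z
  case boundβ => exact norm_normalizedFirstMoment_le (g := fun t => β₀ t x₂ y) (hCβ · x₂ y) z
  case decayα =>
    obtain ⟨R, hR⟩ := hdecay δ hδ
    exact exists_forall_norm_normalizedFirstMoment_le (g := fun x₂ t => α t x₂) hδ
      (fun x₂ t => hCα t x₂) hR
  case decayβ =>
    obtain ⟨R, hR⟩ := hdecay δ hδ
    obtain ⟨R', hR'⟩ := exists_forall_norm_normalizedFirstMoment_le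
      (g := fun (p : E × ℝ) t => β₀ t p.1 p.2) hδ (fun p t => hCβ t p.1 p.2)
      fun t ht p => hR t ht p.1 p.2
    exact ⟨R', fun z hz x₂ y => hR' z hz (x₂, y)⟩

theorem stmt_5 (d : ℕ) (hd : 1 ≤ d) (c₁ c₂ : ℝ) (hc₁ : 0 < c₁) (hc₁₂ : c₁ ≤ c₂)
    (ρ : ℝ → EuclideanSpace ℝ (Fin d) → ℝ)
    (hρmeas : Measurable fun p : ℝ × EuclideanSpace ℝ (Fin d) => ρ p.1 p.2)
    (hρbd : ∀ t x₂, c₁ ≤ ρ t x₂ ∧ ρ t x₂ ≤ c₂)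
    (f : ℝ → EuclideanSpace ℝ (Fin d) → ℝ → ℝ)
    (hfmeas : Measurable fun p : ℝ × EuclideanSpace ℝ (Fin d) × ℝ => f p.1 p.2.1 p.2.2)
    (hfbd : ∃ Cf : ℝ, ∀ t x₂ y, |f t x₂ y| ≤ Cf)
    (ρp ρm : EuclideanSpace ℝ (Fin d) → ℝ)
    (hρp : ∀ x₂, c₁ ≤ ρp x₂) (hρm : ∀ x₂, c₁ ≤ ρm x₂)
    (ρfp ρfm : EuclideanSpace ℝ (Fin d) → ℝ → ℝ)
    (α : ℝ → EuclideanSpace ℝ (Fin d) → ℝ)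
    (hαmeas : Measurable fun p : ℝ × EuclideanSpace ℝ (Fin d) => α p.1 p.2)
    (hαbd : ∃ Cα : ℝ, ∀ z x₂, |α z x₂| ≤ Cα)
    (β₀ : ℝ → EuclideanSpace ℝ (Fin d) → ℝ → ℝ)
    (hβ₀meas : Measurable fun p : ℝ × EuclideanSpace ℝ (Fin d) × ℝ => β₀ p.1 p.2.1 p.2.2)
    (hβ₀bd : ∃ Cβ : ℝ, ∀ z x₂ y, |β₀ z x₂ y| ≤ Cβ)
    (hα : ∀ x₁ : ℝ, x₁ ≠ 0 → ∀ x₂,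
      (1 / x₁) * (∫ t in (0:ℝ)..x₁, ρ t x₂) - pmFun ρp ρm x₁ x₂
        = (1 + ‖x₂‖ ^ 2) * α x₁ x₂)
    (hβ₀ : ∀ x₁ : ℝ, x₁ ≠ 0 → ∀ x₂ y,
      (1 / x₁) * (∫ t in (0:ℝ)..x₁, ρ t x₂ * f t x₂ y) - pmFun ρfp ρfm x₁ x₂ y
        = (1 + ‖x₂‖ ^ 2 + |y| ^ 2) * β₀ x₁ x₂ y)
    -- the corrector
    (V : ℝ → ℝ → EuclideanSpace ℝ (Fin d) → ℝ → ℝ)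
    (hV : ∀ ε : ℝ, 0 < ε → ∀ x₁ x₂ y,
      V ε x₁ x₂ y = ∫ s in (0:ℝ)..x₁, ∫ t in (0:ℝ)..s,
        ρ (t / ε) x₂ * (f (t / ε) x₂ y - fbar ρp ρm ρfp ρfm t x₂ y))
    -- the rescaled remainders
    (βt : ℝ → EuclideanSpace ℝ (Fin d) → ℝ → ℝ)
    (hβtzero : ∀ x₂ y, βt 0 x₂ y = 0)
    (hβt : ∀ z : ℝ, z ≠ 0 → ∀ x₂ y,
      βt z x₂ y = (z ^ 2)⁻¹ * ∫ t in (0:ℝ)..z, t * β₀ t x₂ y)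
    (αt : ℝ → EuclideanSpace ℝ (Fin d) → ℝ)
    (hαtzero : ∀ x₂, αt 0 x₂ = 0)
    (hαt : ∀ z : ℝ, z ≠ 0 → ∀ x₂,
      αt z x₂ = (z ^ 2)⁻¹ * ∫ t in (0:ℝ)..z, t * α t x₂) :
    (∀ ε : ℝ, 0 < ε → ∀ x₁ : ℝ, x₁ ≠ 0 → ∀ x₂ y,
      V ε x₁ x₂ y
        = x₁ ^ 2 * (1 + ‖x₂‖ ^ 2 + |y| ^ 2) * βt (x₁ / ε) x₂ y
          - x₁ ^ 2 * (1 + ‖x₂‖ ^ 2) * fbar ρp ρm ρfp ρfm x₁ x₂ y * αt (x₁ / ε) x₂) ∧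
    ((∀ δ : ℝ, 0 < δ → ∃ R : ℝ, ∀ z : ℝ, R ≤ |z| → ∀ x₂, |α z x₂| ≤ δ) →
     (∀ δ : ℝ, 0 < δ → ∃ R : ℝ, ∀ z : ℝ, R ≤ |z| → ∀ x₂ y, |β₀ z x₂ y| ≤ δ) →
      ((∃ C : ℝ, ∀ z x₂, |αt z x₂| ≤ C) ∧
       (∃ C : ℝ, ∀ z x₂ y, |βt z x₂ y| ≤ C) ∧
       (∀ δ : ℝ, 0 < δ → ∃ R : ℝ, ∀ z : ℝ, R ≤ |z| → ∀ x₂, |αt z x₂| ≤ δ) ∧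
       (∀ δ : ℝ, 0 < δ → ∃ R : ℝ, ∀ z : ℝ, R ≤ |z| → ∀ x₂ y, |βt z x₂ y| ≤ δ))) := by
  obtain ⟨Cf, hCf⟩ := hfbd
  have abs_ρ_le (t x₂) : |ρ t x₂| ≤ c₂ :=
    abs_le.2 ⟨by linarith [hρbd t x₂], (hρbd t x₂).2⟩
  have abs_ρf_le (t x₂ y) : |ρ t x₂ * f t x₂ y| ≤ c₂ * Cf := by
    rw [abs_mul]
    exact mul_le_mul (abs_ρ_le t x₂) (hCf t x₂ y) (abs_nonneg _) (hc₁.le.trans hc₁₂)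
  have ρ_meas (x₂) : Measurable fun t => ρ t x₂ := hρmeas.comp measurable_prodMk_right
  have f_meas (x₂ y) : Measurable fun t => f t x₂ y :=
    hfmeas.comp (measurable_prodMk_right (y := (x₂, y)))
  obtain ⟨corrector_eq, αt_bound, βt_bound, αt_decay, βt_decay⟩ := stmt_5_general ρ f
    (fun x₂ => intervalIntegrable_of_norm_le (ρ_meas x₂).aestronglyMeasurable (abs_ρ_le · x₂))
    (fun x₂ y => intervalIntegrable_of_norm_le
      ((ρ_meas x₂).mul (f_meas x₂ y)).aestronglyMeasurable (abs_ρf_le · x₂ y))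
    ρp ρm (fun x₂ => (hc₁.trans_le (hρp x₂)).ne') (fun x₂ => (hc₁.trans_le (hρm x₂)).ne')
    ρfp ρfm α hαbd β₀ hβ₀bd hα hβ₀ V hV
    βt (fun z x₂ y => eq_normalizedFirstMoment_of_forall_ne_zero (φ := fun z => βt z x₂ y)
      (hβtzero x₂ y) (fun z hz => hβt z hz x₂ y) z)
    αt (fun z x₂ => eq_normalizedFirstMoment_of_forall_ne_zero (φ := fun z => αt z x₂)
      (hαtzero x₂) (fun z hz => hαt z hz x₂) z)
  exact ⟨fun ε hε x₁ _ => corrector_eq ε hε x₁,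
    fun hα_decay hβ_decay => ⟨αt_bound, βt_bound, αt_decay hα_decay, βt_decay hβ_decay⟩⟩
end

section
/- Let d≥1, B_α,B_β≥0, c₀≥0, M>0. Let α:ℝ×ℝ^d→ℝ and β:ℝ×ℝ^d×ℝ→ℝ be measurable with |α|≤B_α and |β|≤B_β, and set s_α(r) := sup_{|z|≥r, x₂∈ℝ^d}|α(z,x₂)| and s_β(r) := sup_{|z|≥r, x₂∈ℝ^d, y∈ℝ}|β(z,x₂,y)|, and assume s_α(r)→0 and s_β(r)→0 as r→∞. For each ε∈(0,1] let V^ε:ℝ×ℝ^d×ℝ→ℝ be measurable with |V^ε(x₁,x₂,y)| ≤ x₁²(1+|x₂|²+|y|²)(|β(x₁/ε,x₂,y)| + c₀|α(x₁/ε,x₂)|) for all (x₁,x₂,y), and let (ξ₁^ε,ξ₂^ε,η^ε) be random variables with values in ℝ×ℝ^d×ℝ satisfying E[|ξ₁^ε|⁴] ≤ M and E[(1+|ξ₂^ε|²+|η^ε|²)²] ≤ M. Then for every ε∈(0,1], E|V^ε(ξ₁^ε,ξ₂^ε,η^ε)| ≤ √M(B_β + c₀B_α)·ε + M·(s_β(ε^{−1/2})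 + c₀ s_α(ε^{−1/2})); in particular E|V^ε(ξ₁^ε,ξ₂^ε,η^ε)| → 0 as ε→0⁺. -/
open MeasureTheory Filter Topology

/-! Write `K = Bβ + c₀ Bα`, `S = sβ(ε^{-1/2}) + c₀ sα(ε^{-1/2})`, and `W` for the weight evaluated
at `(ξ₂, η)`. Where `|ξ₁| < √ε`, the factor `ξ₁²` is at most `ε` and the coefficient at most `K`;
where `|ξ₁| ≥ √ε`, the rescaled variable satisfies `|ξ₁ / ε| ≥ ε^{-1/2}` and the coefficient is at
most `S`. Hence `|V| ≤ ε K W + S ξ₁² W` everywhere, and Cauchy–Schwarz bounds the two expectations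
by `E[W] ≤ √M` and `E[ξ₁² W] ≤ M`. -/

section Supremum

variable {ι κ τ : Type*} {p : ι → Prop} {B : ℝ}

lemma abs_le_iSup₃_of_forall_abs_le {f : ι → κ → τ → ℝ} (hf : ∀ i j k, |f i j k| ≤ B)
    {i : ι} (hi : p i) (j : κ) (k : τ) :
    |f i j k| ≤ ⨆ i, ⨆ j, ⨆ k, ⨆ _ : p i, |f i j k| := by
  have hB : 0 ≤ B := (abs_nonneg _).trans (hf i j k)
  -- The innermost supremum takes the value `0` where `p i` fails, so `0 ≤ B` is needed here.
  have hinner : ∀ i j k, (⨆ _ : p i, |f i j k|) ≤ B :=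
    fun i j k => Real.iSup_le (fun _ => hf i j k) hB
  calc |f i j k| = ⨆ _ : p i, |f i j k| := (ciSup_pos (f := fun _ => |f i j k|) hi).symm
    _ ≤ ⨆ k, ⨆ _ : p i, |f i j k| := le_ciSup ⟨B, Set.forall_mem_range.2 (hinner i j)⟩ k
    _ ≤ ⨆ i, ⨆ j, ⨆ k, ⨆ _ : p i, |f i j k| := by
      refine le_ciSup₂ (f := fun i j => ⨆ k, ⨆ _ : p i, |f i j k|) ⟨B, ?_⟩ i j
      rintro _ ⟨_, ⟨i, rfl⟩, j, rfl⟩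
      exact Real.iSup_le (hinner i j) hB

lemma abs_le_iSup₂_of_forall_abs_le {f : ι → κ → ℝ} (hf : ∀ i j, |f i j| ≤ B)
    {i : ι} (hi : p i) (j : κ) :
    |f i j| ≤ ⨆ i, ⨆ j, ⨆ _ : p i, |f i j| := by
  simpa only [ciSup_unique] using
    abs_le_iSup₃_of_forall_abs_le (f := fun i j (_ : Unit) => f i j) (fun i j _ => hf i j) hi j ()

end Supremum

section SecondMoment

variable {Ω : Type*} [MeasurableSpace Ω] {μ : Measure Ω} {f g : Ω → ℝ}

lemma memLp_two_of_nonneg_of_integrable_sq (hf : ∀ ω, 0 ≤ f ω)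
    (hint : Integrable (fun ω => f ω ^ 2) μ) : MemLp f 2 μ := by
  have hsqrt : (fun ω => √(f ω ^ 2)) = f := funext fun ω => Real.sqrt_sq (hf ω)
  have hmeas : AEStronglyMeasurable f μ :=
    hsqrt ▸ Real.continuous_sqrt.comp_aestronglyMeasurable hint.aestronglyMeasurable
  exact (memLp_two_iff_integrable_sq hmeas).2 hint

lemma integral_mul_le_sqrt_mul_sqrt (hf : MemLp f 2 μ) (hg : MemLp g 2 μ) :
    ∫ ω, f ω * g ω ∂μ ≤ √(∫ ω, f ω ^ 2 ∂μ) * √(∫ ω, g ω ^ 2 ∂μ) := by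
  have hnorm : ∫ ω, f ω * g ω ∂μ ≤ ∫ ω, ‖f ω‖ * ‖g ω‖ ∂μ :=
    integral_mono (hf.integrable_mul hg) (hf.norm.integrable_mul hg.norm)
      fun ω => (le_abs_self _).trans_eq (abs_mul _ _)
  have holder := integral_mul_norm_le_Lp_mul_Lq (μ := μ) (f := f) (g := g)
    Real.HolderConjugate.two_two (by simpa using hf) (by simpa using hg)
  simpa [Real.sqrt_eq_rpow] using hnorm.trans holder

lemma integral_le_sqrt_integral_sq [IsProbabilityMeasure μ] (hf : MemLp f 2 μ) :
    ∫ ω, f ω ∂μ ≤ √(∫ ω, f ω ^ 2 ∂μ) := by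
  simpa using integral_mul_le_sqrt_mul_sqrt hf (memLp_const (1 : ℝ))

end SecondMoment

lemma sq_mul_mul_le_add_of_le {x w g δ K S : ℝ} (hw : 0 ≤ w) (hg : 0 ≤ g) (hS : 0 ≤ S)
    (hgK : g ≤ K) (hgS : δ ≤ |x| → g ≤ S) :
    x ^ 2 * w * g ≤ δ ^ 2 * K * w + S * (x ^ 2 * w) := by
  have hK : 0 ≤ K := hg.trans hgK
  rcases lt_or_ge |x| δ with hx | hx
  · have hxδ : x ^ 2 ≤ δ ^ 2 := sq_le_sq.2 (hx.le.trans (le_abs_self δ))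
    calc x ^ 2 * w * g ≤ δ ^ 2 * w * K := by gcongr
      _ = δ ^ 2 * K * w := by ring
      _ ≤ δ ^ 2 * K * w + S * (x ^ 2 * w) := le_add_of_nonneg_right (by positivity)
  · calc x ^ 2 * w * g ≤ x ^ 2 * w * S := by gcongr; exact hgS hx
      _ = S * (x ^ 2 * w) := by ring
      _ ≤ δ ^ 2 * K * w + S * (x ^ 2 * w) := le_add_of_nonneg_left (by positivity)

section WeightedSquare

variable {Ω E : Type*} [MeasurableSpace Ω] {P : Measure Ω}
  [NormedAddCommGroup E] {F : Ω → E} {X W G : Ω → ℝ} {δ K S M : ℝ}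

lemma integrable_of_norm_le_sq_mul_mul (hF : AEStronglyMeasurable F P)
    (hX : MemLp (fun ω => X ω ^ 2) 2 P) (hW : MemLp W 2 P) (hW₀ : ∀ ω, 0 ≤ W ω)
    (hGK : ∀ ω, G ω ≤ K) (hFle : ∀ ω, ‖F ω‖ ≤ X ω ^ 2 * W ω * G ω) :
    Integrable F P :=
  ((hX.integrable_mul hW).mul_const K).mono' hF <| .of_forall fun ω =>
    (hFle ω).trans <| mul_le_mul_of_nonneg_left (hGK ω) (mul_nonneg (sq_nonneg _) (hW₀ ω))

lemma integral_norm_le_of_norm_le_sq_mul_mul [IsProbabilityMeasure P]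
    (hX : MemLp (fun ω => X ω ^ 2) 2 P) (hXM : ∫ ω, (X ω ^ 2) ^ 2 ∂P ≤ M)
    (hW : MemLp W 2 P) (hWM : ∫ ω, W ω ^ 2 ∂P ≤ M) (hW₀ : ∀ ω, 0 ≤ W ω)
    (hG₀ : ∀ ω, 0 ≤ G ω) (hGK : ∀ ω, G ω ≤ K) (hS : 0 ≤ S) (hGS : ∀ ω, δ ≤ |X ω| → G ω ≤ S)
    (hFle : ∀ ω, ‖F ω‖ ≤ X ω ^ 2 * W ω * G ω) :
    ∫ ω, ‖F ω‖ ∂P ≤ √M * K * δ ^ 2 + M * S := by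
  obtain ⟨ω₀⟩ := P.nonempty_of_neZero
  have hK : 0 ≤ K := (hG₀ ω₀).trans (hGK ω₀)
  have hM : 0 ≤ M := (integral_nonneg fun ω => sq_nonneg (W ω)).trans hWM
  have hWint : Integrable (fun ω => δ ^ 2 * K * W ω) P := (hW.integrable one_le_two).const_mul _
  have hXWint : Integrable (fun ω => S * (X ω ^ 2 * W ω)) P := (hX.integrable_mul hW).const_mul S
  have hWle : ∫ ω, W ω ∂P ≤ √M := (integral_le_sqrt_integral_sq hW).trans (Real.sqrt_le_sqrt hWM)
  have hXWle : ∫ ω, X ω ^ 2 * W ω ∂P ≤ M :=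
    calc ∫ ω, X ω ^ 2 * W ω ∂P
        ≤ √(∫ ω, (X ω ^ 2) ^ 2 ∂P) * √(∫ ω, W ω ^ 2 ∂P) := integral_mul_le_sqrt_mul_sqrt hX hW
      _ ≤ √M * √M := by gcongr
      _ = M := Real.mul_self_sqrt hM
  calc ∫ ω, ‖F ω‖ ∂P
      ≤ ∫ ω, (δ ^ 2 * K * W ω + S * (X ω ^ 2 * W ω)) ∂P :=
        integral_mono_of_nonneg (.of_forall fun _ => norm_nonneg _) (hWint.add hXWint) <|
          .of_forall fun ω => (hFle ω).trans <|
            sq_mul_mul_le_add_of_le (hW₀ ω) (hG₀ ω) hS (hGK ω) (hGS ω)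
    _ = δ ^ 2 * K * ∫ ω, W ω ∂P + S * ∫ ω, X ω ^ 2 * W ω ∂P := by
        rw [integral_add hWint hXWint, integral_const_mul, integral_const_mul]
    _ ≤ δ ^ 2 * K * √M + S * M := by gcongr
    _ = √M * K * δ ^ 2 + M * S := by ring

end WeightedSquare

lemma inv_sqrt_le_abs_div {x ε : ℝ} (hε : 0 < ε) (hx : √ε ≤ |x|) : (√ε)⁻¹ ≤ |x / ε| :=
  calc (√ε)⁻¹ = √ε / ε := Real.sqrt_div_self.symm
    _ ≤ |x| / ε := by gcongr
    _ = |x / ε| := by rw [abs_div, abs_of_pos hε]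

lemma tendsto_inv_sqrt_nhdsGT_zero : Tendsto (fun ε : ℝ => (√ε)⁻¹) (𝓝[>] 0) atTop := by
  simpa only [Function.comp_def, Real.sqrt_inv] using
    Real.tendsto_sqrt_atTop.comp (tendsto_inv_nhdsGT_zero (𝕜 := ℝ))

section Rescaled

variable {Ω E F : Type*} [MeasurableSpace Ω] {P : Measure Ω} [IsProbabilityMeasure P]
  {Bα Bβ c₀ M : ℝ} {α : ℝ → E → ℝ} {β : ℝ → E → F → ℝ} {sα sβ : ℝ → ℝ} {w : E → F → ℝ}

lemma integrable_and_integral_abs_le_of_abs_le_sq_mul_mul {ε : ℝ} (hε : 0 < ε) (hc₀ : 0 ≤ c₀)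
    (hαbd : ∀ z x₂, |α z x₂| ≤ Bα) (hβbd : ∀ z x₂ y, |β z x₂ y| ≤ Bβ)
    (hsα : ∀ r : ℝ, sα r = ⨆ z : ℝ, ⨆ x₂, ⨆ _ : r ≤ |z|, |α z x₂|)
    (hsβ : ∀ r : ℝ, sβ r = ⨆ z : ℝ, ⨆ x₂, ⨆ y, ⨆ _ : r ≤ |z|, |β z x₂ y|)
    (hw : ∀ x₂ y, 0 ≤ w x₂ y) {V : ℝ → E → F → ℝ}
    (hV : ∀ x₁ x₂ y, |V x₁ x₂ y| ≤
      x₁ ^ 2 * w x₂ y * (|β (x₁ / ε) x₂ y| + c₀ * |α (x₁ / ε) x₂|))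
    {ξ₁ : Ω → ℝ} {ξ₂ : Ω → E} {η : Ω → F}
    (hVmeas : AEStronglyMeasurable (fun ω => V (ξ₁ ω) (ξ₂ ω) (η ω)) P)
    (hξ₁int : Integrable (fun ω => |ξ₁ ω| ^ 4) P) (hξ₁bd : ∫ ω, |ξ₁ ω| ^ 4 ∂P ≤ M)
    (hwint : Integrable (fun ω => w (ξ₂ ω) (η ω) ^ 2) P)
    (hwbd : ∫ ω, w (ξ₂ ω) (η ω) ^ 2 ∂P ≤ M) :
    Integrable (fun ω => V (ξ₁ ω) (ξ₂ ω) (η ω)) P ∧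
      ∫ ω, |V (ξ₁ ω) (ξ₂ ω) (η ω)| ∂P
        ≤ √M * (Bβ + c₀ * Bα) * ε + M * (sβ (√ε)⁻¹ + c₀ * sα (√ε)⁻¹) := by
  have hW₀ (ω) : 0 ≤ w (ξ₂ ω) (η ω) := hw _ _
  have hVle (ω) : ‖V (ξ₁ ω) (ξ₂ ω) (η ω)‖ ≤ ξ₁ ω ^ 2 * w (ξ₂ ω) (η ω) *
      (|β (ξ₁ ω / ε) (ξ₂ ω) (η ω)| + c₀ * |α (ξ₁ ω / ε) (ξ₂ ω)|) := hV _ _ _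
  have hcoeff (ω) : |β (ξ₁ ω / ε) (ξ₂ ω) (η ω)| + c₀ * |α (ξ₁ ω / ε) (ξ₂ ω)| ≤ Bβ + c₀ * Bα := by
    gcongr
    exacts [hβbd _ _ _, hαbd _ _]
  have htail (ω) (hω : √ε ≤ |ξ₁ ω|) :
      |β (ξ₁ ω / ε) (ξ₂ ω) (η ω)| + c₀ * |α (ξ₁ ω / ε) (ξ₂ ω)| ≤
        sβ (√ε)⁻¹ + c₀ * sα (√ε)⁻¹ := by
    have hr : (√ε)⁻¹ ≤ |ξ₁ ω / ε| := inv_sqrt_le_abs_div hε hω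
    rw [hsβ, hsα]
    gcongr
    · exact abs_le_iSup₃_of_forall_abs_le (p := fun z : ℝ => (√ε)⁻¹ ≤ |z|) hβbd hr _ _
    · exact abs_le_iSup₂_of_forall_abs_le (p := fun z : ℝ => (√ε)⁻¹ ≤ |z|) hαbd hr _
  have htail₀ : 0 ≤ sβ (√ε)⁻¹ + c₀ * sα (√ε)⁻¹ := by
    have hsα₀ : 0 ≤ sα (√ε)⁻¹ := hsα _ ▸ Real.iSup_nonneg fun _ => Real.iSup_nonneg fun _ =>
      Real.iSup_nonneg fun _ => abs_nonneg _
    have hsβ₀ : 0 ≤ sβ (√ε)⁻¹ := hsβ _ ▸ Real.iSup_nonneg fun _ => Real.iSup_nonneg fun _ =>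
      Real.iSup_nonneg fun _ => Real.iSup_nonneg fun _ => abs_nonneg _
    positivity
  have hpow (x : ℝ) : |x| ^ 4 = (x ^ 2) ^ 2 := by rw [Even.pow_abs ⟨2, rfl⟩, ← pow_mul]
  simp only [hpow] at hξ₁int hξ₁bd
  have hX := memLp_two_of_nonneg_of_integrable_sq (fun ω => sq_nonneg (ξ₁ ω)) hξ₁int
  have hW := memLp_two_of_nonneg_of_integrable_sq hW₀ hwint
  refine ⟨integrable_of_norm_le_sq_mul_mul hVmeas hX hW hW₀ hcoeff hVle, ?_⟩
  simpa only [Real.sq_sqrt hε.le, Real.norm_eq_abs] using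
    integral_norm_le_of_norm_le_sq_mul_mul hX hξ₁bd hW hwbd hW₀ (fun _ => by positivity) hcoeff
      htail₀ htail hVle

lemma tendsto_nhdsGT_zero_of_le_add_tail {A : ℝ} {f : ℝ → ℝ}
    (hsα : Tendsto sα atTop (𝓝 0)) (hsβ : Tendsto sβ atTop (𝓝 0)) (hf₀ : ∀ ε, 0 ≤ f ε)
    (hf : ∀ ε, 0 < ε → ε ≤ 1 → f ε ≤ A * ε + M * (sβ (√ε)⁻¹ + c₀ * sα (√ε)⁻¹)) :
    Tendsto f (𝓝[>] 0) (𝓝 0) := by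
  have hid : Tendsto (fun ε : ℝ => ε) (𝓝[>] 0) (𝓝 0) := nhdsWithin_le_nhds
  have htail := (hsβ.comp tendsto_inv_sqrt_nhdsGT_zero).add
    ((hsα.comp tendsto_inv_sqrt_nhdsGT_zero).const_mul c₀)
  have hbound : Tendsto (fun ε => A * ε + M * (sβ (√ε)⁻¹ + c₀ * sα (√ε)⁻¹)) (𝓝[>] 0) (𝓝 0) := by
    simpa using (hid.const_mul A).add (htail.const_mul M)
  refine squeeze_zero' (.of_forall hf₀) ?_ hbound
  filter_upwards [Ioc_mem_nhdsGT (zero_lt_one (α := ℝ))] with ε hε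
  exact hf ε hε.1 hε.2

end Rescaled

theorem stmt_10_general {Ω E F : Type*} [MeasurableSpace Ω] (P : Measure Ω)
    [IsProbabilityMeasure P] (Bα Bβ c₀ M : ℝ) (hc₀ : 0 ≤ c₀)
    (α : ℝ → E → ℝ) (β : ℝ → E → F → ℝ)
    (hαbd : ∀ z x₂, |α z x₂| ≤ Bα) (hβbd : ∀ z x₂ y, |β z x₂ y| ≤ Bβ)
    (sα sβ : ℝ → ℝ)
    (hsα : ∀ r : ℝ, sα r = ⨆ z : ℝ, ⨆ x₂ : E, ⨆ _ : r ≤ |z|, |α z x₂|)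
    (hsβ : ∀ r : ℝ, sβ r = ⨆ z : ℝ, ⨆ x₂ : E, ⨆ y : F, ⨆ _ : r ≤ |z|, |β z x₂ y|)
    (hsαlim : Tendsto sα atTop (𝓝 0)) (hsβlim : Tendsto sβ atTop (𝓝 0))
    (w : E → F → ℝ) (hw : ∀ x₂ y, 0 ≤ w x₂ y)
    (V : ℝ → ℝ → E → F → ℝ)
    (hVbd : ∀ ε : ℝ, 0 < ε → ε ≤ 1 → ∀ x₁ x₂ y,
      |V ε x₁ x₂ y| ≤ x₁ ^ 2 * w x₂ y * (|β (x₁ / ε) x₂ y| + c₀ * |α (x₁ / ε) x₂|))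
    (ξ₁ : ℝ → Ω → ℝ) (ξ₂ : ℝ → Ω → E) (η : ℝ → Ω → F)
    (hVmeas : ∀ ε : ℝ, 0 < ε → ε ≤ 1 →
      AEStronglyMeasurable (fun ω => V ε (ξ₁ ε ω) (ξ₂ ε ω) (η ε ω)) P)
    (hξ₁int : ∀ ε : ℝ, 0 < ε → ε ≤ 1 → Integrable (fun ω => |ξ₁ ε ω| ^ 4) P)
    (hξ₁bd : ∀ ε : ℝ, 0 < ε → ε ≤ 1 → ∫ ω, |ξ₁ ε ω| ^ 4 ∂P ≤ M)
    (hwint : ∀ ε : ℝ, 0 < ε → ε ≤ 1 → Integrable (fun ω => w (ξ₂ ε ω) (η ε ω) ^ 2) P)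
    (hwbd : ∀ ε : ℝ, 0 < ε → ε ≤ 1 → ∫ ω, w (ξ₂ ε ω) (η ε ω) ^ 2 ∂P ≤ M) :
    (∀ ε : ℝ, 0 < ε → ε ≤ 1 →
      Integrable (fun ω => V ε (ξ₁ ε ω) (ξ₂ ε ω) (η ε ω)) P ∧
        ∫ ω, |V ε (ξ₁ ε ω) (ξ₂ ε ω) (η ε ω)| ∂P
          ≤ √M * (Bβ + c₀ * Bα) * ε + M * (sβ (√ε)⁻¹ + c₀ * sα (√ε)⁻¹)) ∧
    Tendsto (fun ε => ∫ ω, |V ε (ξ₁ ε ω) (ξ₂ ε ω) (η ε ω)| ∂P) (𝓝[>] (0:ℝ)) (𝓝 0) := by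
  have hbound (ε) (hε : 0 < ε) (hε₁ : ε ≤ 1) :=
    integrable_and_integral_abs_le_of_abs_le_sq_mul_mul hε hc₀ hαbd hβbd hsα hsβ hw
      (hVbd ε hε hε₁) (hVmeas ε hε hε₁) (hξ₁int ε hε hε₁) (hξ₁bd ε hε hε₁) (hwint ε hε hε₁)
      (hwbd ε hε hε₁)
  exact ⟨hbound, tendsto_nhdsGT_zero_of_le_add_tail hsαlim hsβlim
    (fun ε => integral_nonneg fun ω => abs_nonneg _) fun ε hε hε₁ => (hbound ε hε hε₁).2⟩

theorem stmt_10 {Ω : Type*} [MeasurableSpace Ω] (P : Measure Ω) [IsProbabilityMeasure P]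
    (d : ℕ) (hd : 1 ≤ d) (Bα Bβ c₀ M : ℝ)
    (hBα : 0 ≤ Bα) (hBβ : 0 ≤ Bβ) (hc₀ : 0 ≤ c₀) (hM : 0 < M)
    (α : ℝ → EuclideanSpace ℝ (Fin d) → ℝ)
    (β : ℝ → EuclideanSpace ℝ (Fin d) → ℝ → ℝ)
    (hαmeas : Measurable fun p : ℝ × EuclideanSpace ℝ (Fin d) => α p.1 p.2)
    (hβmeas : Measurable fun p : ℝ × EuclideanSpace ℝ (Fin d) × ℝ => β p.1 p.2.1 p.2.2)
    (hαbd : ∀ z x₂, |α z x₂| ≤ Bα)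
    (hβbd : ∀ z x₂ y, |β z x₂ y| ≤ Bβ)
    (sα sβ : ℝ → ℝ)
    (hsα : ∀ r : ℝ, sα r = ⨆ z : ℝ, ⨆ x₂ : EuclideanSpace ℝ (Fin d),
      ⨆ _ : r ≤ |z|, |α z x₂|)
    (hsβ : ∀ r : ℝ, sβ r = ⨆ z : ℝ, ⨆ x₂ : EuclideanSpace ℝ (Fin d), ⨆ y : ℝ,
      ⨆ _ : r ≤ |z|, |β z x₂ y|)
    (hsαlim : Tendsto sα atTop (𝓝 0)) (hsβlim : Tendsto sβ atTop (𝓝 0))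
    (V : ℝ → ℝ → EuclideanSpace ℝ (Fin d) → ℝ → ℝ)
    (hVmeas : ∀ ε : ℝ, 0 < ε → ε ≤ 1 →
      Measurable fun p : ℝ × EuclideanSpace ℝ (Fin d) × ℝ => V ε p.1 p.2.1 p.2.2)
    (hVbd : ∀ ε : ℝ, 0 < ε → ε ≤ 1 → ∀ x₁ x₂ y,
      |V ε x₁ x₂ y| ≤ x₁ ^ 2 * (1 + ‖x₂‖ ^ 2 + |y| ^ 2)
        * (|β (x₁ / ε) x₂ y| + c₀ * |α (x₁ / ε) x₂|))
    (ξ₁ : ℝ → Ω → ℝ) (ξ₂ : ℝ → Ω → EuclideanSpace ℝ (Fin d)) (η : ℝ → Ω → ℝ)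
    (hξ₁meas : ∀ ε : ℝ, 0 < ε → ε ≤ 1 → Measurable (ξ₁ ε))
    (hξ₂meas : ∀ ε : ℝ, 0 < ε → ε ≤ 1 → Measurable (ξ₂ ε))
    (hηmeas : ∀ ε : ℝ, 0 < ε → ε ≤ 1 → Measurable (η ε))
    (hξ₁int : ∀ ε : ℝ, 0 < ε → ε ≤ 1 → Integrable (fun ω => |ξ₁ ε ω| ^ 4) P)
    (hξ₁bd : ∀ ε : ℝ, 0 < ε → ε ≤ 1 → ∫ ω, |ξ₁ ε ω| ^ 4 ∂P ≤ M)
    (hmomint : ∀ ε : ℝ, 0 < ε → ε ≤ 1 →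
      Integrable (fun ω => (1 + ‖ξ₂ ε ω‖ ^ 2 + |η ε ω| ^ 2) ^ 2) P)
    (hmombd : ∀ ε : ℝ, 0 < ε → ε ≤ 1 →
      ∫ ω, (1 + ‖ξ₂ ε ω‖ ^ 2 + |η ε ω| ^ 2) ^ 2 ∂P ≤ M) :
    (∀ ε : ℝ, 0 < ε → ε ≤ 1 →
      ∫ ω, |V ε (ξ₁ ε ω) (ξ₂ ε ω) (η ε ω)| ∂P
        ≤ Real.sqrt M * (Bβ + c₀ * Bα) * ε
          + M * (sβ ((Real.sqrt ε)⁻¹) + c₀ * sα ((Real.sqrt ε)⁻¹))) ∧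
    Tendsto (fun ε => ∫ ω, |V ε (ξ₁ ε ω) (ξ₂ ε ω) (η ε ω)| ∂P) (𝓝[>] (0:ℝ)) (𝓝 0) := by
  have hgeneral := stmt_10_general P Bα Bβ c₀ M hc₀ α β hαbd hβbd sα sβ hsα hsβ hsαlim hsβlim
    (fun x₂ y => 1 + ‖x₂‖ ^ 2 + |y| ^ 2) (fun _ _ => by positivity) V hVbd ξ₁ ξ₂ η
    (fun ε h₀ h₁ => ((hVmeas ε h₀ h₁).comp <| (hξ₁meas ε h₀ h₁).prodMk <|
      (hξ₂meas ε h₀ h₁).prodMk (hηmeas ε h₀ h₁)).aestronglyMeasurable)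
    hξ₁int hξ₁bd hmomint hmombd
  exact ⟨fun ε h₀ h₁ => (hgeneral.1 ε h₀ h₁).2, hgeneral.2⟩
end
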